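/- Let 0<p,q≤∞ and 0<p₀<p. There exists a constant C>0, depending only on p₀,p,q, such that for every R>0 and every f∈E_R with ‖f‖_{L^{p,q}(ℝ)}<∞, the sequence a=(f(n))_{n∈ℤ} belongs to ℓ^{p,q}(ℤ) and ‖a‖_{ℓ^{p,q}(ℤ)} ≤ C·max(1,R^{1/p₀})·‖f‖_{L^{p,q}(ℝ)}. -/

import Mathlib

open MeasureTheory Complex SchwartzMap Filter
open scoped FourierTransform ENNReal NNReal Real

/-- The distribution function of an `ℝ≥0∞`-valued function. -/
noncomputable def distFn {X : Type*} [MeasurableSpace X] (μ : Measure X)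
    (f : X → ℝ≥0∞) (t : ℝ) : ℝ≥0∞ :=
  μ {x | ENNReal.ofReal t < f x}

/-- The Lorentz `L^{p,q}` quasinorm, defined via the distribution function. -/
noncomputable def lorentzNorm {X : Type*} [MeasurableSpace X] (μ : Measure X)
    (p q : ℝ≥0∞) (f : X → ℝ≥0∞) : ℝ≥0∞ :=
  if q = ∞ then ⨆ t ∈ Set.Ioi (0 : ℝ), ENNReal.ofReal t * distFn μ f t ^ (1 / p.toReal)
  else (q * ∫⁻ t in Set.Ioi (0 : ℝ),
      ENNReal.ofReal (t ^ (q.toReal - 1)) * distFn μ f t ^ (q.toReal / p.toReal)) ^ (1 / q.toReal)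

/-- The Lorentz `L^{p,q}` quasinorm of a complex-valued function. -/
noncomputable def lorentzNormC {X : Type*} [MeasurableSpace X] (μ : Measure X)
    (p q : ℝ≥0∞) (f : X → ℂ) : ℝ≥0∞ :=
  lorentzNorm μ p q fun x => (‖f x‖₊ : ℝ≥0∞)

/-- A function is locally bounded if it is bounded on every compact set. -/
def LocallyBounded (m : ℝ × ℝ → ℂ) : Prop :=
  ∀ K : Set (ℝ × ℝ), IsCompact K → ∃ C : ℝ, ∀ z ∈ K, ‖m z‖ ≤ C

/-- The bilinear multiplier operator `C_m`. -/
noncomputable def Cm (m : ℝ × ℝ → ℂ) (f g : 𝓢(ℝ, ℂ)) (x : ℝ) : ℂ :=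
  ∫ ξ : ℝ, ∫ η : ℝ, 𝓕 (f : ℝ → ℂ) ξ * 𝓕 (g : ℝ → ℂ) η * m (ξ, η) *
    Complex.exp (2 * Real.pi * Complex.I * (x : ℂ) * ((ξ : ℂ) + (η : ℂ)))

/-- The trigonometric polynomial with coefficients `a`. -/
noncomputable def trigP (a : ℤ → ℂ) (ξ : ℝ) : ℂ :=
  ∑ᶠ k : ℤ, a k * Complex.exp (-(2 * Real.pi) * Complex.I * (k : ℂ) * (ξ : ℂ))

/-- The discrete bilinear operator `D_{m̃_{t,p}}`. -/
noncomputable def Dop (m : ℝ × ℝ → ℂ) (t p : ℝ) (a b : ℤ → ℂ) (n : ℤ) : ℂ :=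
  ((t ^ (1 / p) : ℝ) : ℂ) *
    ∫ ξ in Set.Icc (-(1/2) : ℝ) (1/2), ∫ η in Set.Icc (-(1/2) : ℝ) (1/2),
      trigP a ξ * trigP b η * m (t * ξ, t * η) *
        Complex.exp (2 * Real.pi * Complex.I * (n : ℂ) * ((ξ : ℂ) + (η : ℂ)))

/-- `InER R f` : `f` is (a representative of) a tempered distribution of exponential type,
i.e. a continuous function of polynomial growth whose distributional Fourier transform is
supported in `[-R, R]`. -/
def InER (R : ℝ) (f : ℝ → ℂ) : Prop :=
  Continuous f ∧ (∃ (C : ℝ) (k : ℕ), ∀ x : ℝ, ‖f x‖ ≤ C * (1 + |x|) ^ k) ∧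
  ∀ φ : 𝓢(ℝ, ℂ), Disjoint (tsupport (φ : ℝ → ℂ)) (Set.Icc (-R) R) →
    ∫ x : ℝ, f x * 𝓕 (φ : ℝ → ℂ) x = 0

/-- The discrete bilinear Hilbert transform. -/
noncomputable def bhtZ (α : ℤ) (a b : ℤ → ℂ) (n : ℤ) : ℂ :=
  ((Real.pi : ℂ))⁻¹ * ∑ᶠ (k : ℤ) (_ : k ≠ 0), a (n - k) * b (n - α * k) * (k : ℂ)⁻¹

/-- `sinc x = sin (π x) / (π x)`, with `sinc 0 = 1`. -/
noncomputable def mySinc (x : ℝ) : ℝ :=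
  if x = 0 then 1 else Real.sin (Real.pi * x) / (Real.pi * x)

lemma schwartz_decay (K : 𝓢(ℝ, ℂ)) (N : ℕ) :
    ∃ B : ℝ, 0 < B ∧ ∀ u, ‖K u‖ ≤ B * ((1 + |u|)⁻¹) ^ N := by
  have h := fun u => SchwartzMap.one_add_le_sup_seminorm_apply (𝕜 := ℂ) (m := (N, 0)) le_rfl le_rfl K u
  simp only [norm_iteratedFDeriv_zero] at h
  refine ⟨2 ^ N * ((Finset.Iic (N, 0)).sup fun m => SchwartzMap.seminorm ℂ m.1 m.2) K + 1, by positivity, fun u => ?_⟩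
  have hpos : 0 < (1 + |u|) ^ N := by positivity
  rw [inv_pow, ← div_eq_mul_inv, le_div_iff₀ hpos, mul_comm]
  have := h u
  rw [Real.norm_eq_abs] at this
  linarith

lemma inv_one_add_sq_integrable : Integrable (fun u : ℝ => ((1 + |u|)⁻¹) ^ 2) := by
  have := integrable_one_add_norm (E := ℝ) (μ := volume) (r := 2) (by simp)
  refine this.congr (ae_of_all _ fun u => ?_)
  simp only [Real.norm_eq_abs]
  rw [Real.rpow_neg (by positivity), inv_pow]
  norm_cast

/-- domination -/
lemma dom_aux (f : ℝ → ℂ) (D : ℝ) (k : ℕ)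
    (hD : ∀ x, ‖f x‖ ≤ D * (1 + |x|) ^ k) (K : 𝓢(ℝ, ℂ)) (x : ℝ) :
    ∃ A : ℝ, ∀ r : ℝ, 1 ≤ r → ∀ u : ℝ, ‖f (x + u / r) * K u‖ ≤ A * ((1 + |u|)⁻¹) ^ 2 := by
  obtain ⟨B, hB, hK⟩ := schwartz_decay K (k + 2)
  have hD0 : 0 ≤ D := by
    have := (norm_nonneg _).trans (hD 0)
    simpa using this
  refine ⟨D * (1 + |x|) ^ k * B, fun r hr u => ?_⟩
  have h1 : 1 + |x + u / r| ≤ (1 + |x|) * (1 + |u|) := by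
    have h2 : |u / r| ≤ |u| := by
      rw [abs_div]
      exact div_le_self (abs_nonneg _) (hr.trans (le_abs_self r))
    have := abs_add_le x (u / r)
    nlinarith [abs_nonneg x, abs_nonneg u, mul_nonneg (abs_nonneg x) (abs_nonneg u)]
  have hu : (1 + |u|) ≠ 0 := by positivity
  calc ‖f (x + u / r) * K u‖ = ‖f (x + u / r)‖ * ‖K u‖ := norm_mul _ _
    _ ≤ (D * ((1 + |x|) * (1 + |u|)) ^ k) * (B * ((1 + |u|)⁻¹) ^ (k + 2)) := by
        gcongr
        · exact (hD _).trans (by gcongr)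
        · exact hK u
    _ = D * (1 + |x|) ^ k * B * ((1 + |u|)⁻¹) ^ 2 := by
        rw [mul_pow, pow_add]
        have : (1 + |u|) ^ k * ((1 + |u|)⁻¹) ^ k = 1 := by
          rw [← mul_pow, mul_inv_cancel₀ hu, one_pow]
        linear_combination (D * (1 + |x|) ^ k * B * ((1 + |u|)⁻¹) ^ 2) * this

/-- The bump function -/
noncomputable def bmp : ContDiffBump (0 : ℝ) := ⟨2, 3, by norm_num, by norm_num⟩

noncomputable def bmpC (x : ℝ) : ℂ := ((bmp x : ℝ) : ℂ)

lemma bmpC_contDiff' : ContDiff ℝ (↑(⊤ : ℕ∞)) bmpC := by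
  unfold bmpC
  exact Complex.ofRealCLM.contDiff.comp bmp.contDiff

lemma bmpC_one {x : ℝ} (h : |x| ≤ 2) : bmpC x = 1 := by
  unfold bmpC
  rw [bmp.one_of_mem_closedBall (by simpa [bmp] using h)]
  simp

lemma bmpC_zero {x : ℝ} (h : 3 ≤ |x|) : bmpC x = 0 := by
  unfold bmpC
  rw [bmp.zero_of_le_dist (by simpa [bmp] using h)]
  simp

lemma bmpC_cs : HasCompactSupport bmpC :=
  HasCompactSupport.intro (isCompact_Icc (a := (-3 : ℝ)) (b := 3)) fun x hx => by
    apply bmpC_zero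
    by_contra h
    push Not at h
    exact hx ⟨(abs_lt.1 h).1.le, (abs_lt.1 h).2.le⟩

noncomputable def bmpS : 𝓢(ℝ, ℂ) := bmpC_cs.toSchwartzMap bmpC_contDiff'

noncomputable def KK : 𝓢(ℝ, ℂ) := 𝓕 bmpS

lemma KK_eq (y : ℝ) : KK y = ∫ v : ℝ, Complex.exp (↑(-2 * π * v * y) * I) * bmpC v := by
  rw [KK, fourier_coe, Real.fourier_real_eq_integral_exp_smul]
  rfl

lemma KK_int : ∫ u, KK u = 1 := by
  have h : 𝓕⁻ (𝓕 bmpS) 0 = bmpS 0 := by rw [FourierTransform.fourierInv_fourier_eq]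
  rw [fourierInv_coe, Real.fourierInv_eq'] at h
  have h2 : bmpS 0 = 1 := by
    change bmpC 0 = 1
    exact bmpC_one (by simp)
  rw [h2] at h
  simpa [KK] using h

lemma fourier_piece (r x y : ℝ) (hr : 0 < r) :
    ∫ v : ℝ, Complex.exp (↑(-2 * π * v * y) * I) * (Complex.exp (↑(2 * π * v * x) * I) * bmpC (v / r))
      = r * KK (r * (y - x)) := by
  rw [KK_eq]
  have := Measure.integral_comp_div (fun w : ℝ => Complex.exp (↑(-2 * π * w * (r * (y - x))) * I) * bmpC w) r
  rw [abs_of_pos hr, Complex.real_smul] at this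
  rw [← this]
  congr 1
  ext v
  rw [← mul_assoc, ← Complex.exp_add]
  congr 2
  push_cast
  have : (r : ℂ) ≠ 0 := by exact_mod_cast hr.ne'
  field_simp
  ring

lemma I_const (f : ℝ → ℂ) (R r x : ℝ) (hR : 0 < R) (hf : InER R f) (R1 : ℝ) (hR1 : R ≤ R1) (h11 : 1 ≤ R1)
    (hr : R1 ≤ r) :
    ∫ u, f (x + u / r) * KK u = ∫ u, f (x + u / R1) * KK u := by
  obtain ⟨hc, ⟨D, k, hD⟩, hF⟩ := hf
  have hR1p : 0 < R1 := hR.trans_le hR1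
  have hrp : 0 < r := hR1p.trans_le hr
  have hint : ∀ ρ : ℝ, 1 ≤ ρ → Integrable (fun u => f (x + u / ρ) * KK u) := by
    intro ρ hρ
    obtain ⟨A, hA⟩ := dom_aux f D k hD KK x
    refine (inv_one_add_sq_integrable.const_mul A).mono' ?_ (ae_of_all _ (hA ρ hρ))
    exact ((hc.comp (by fun_prop)).mul KK.continuous).aestronglyMeasurable
  have key : ∀ ρ : ℝ, 1 ≤ ρ → Integrable (fun y => f y * (ρ * KK (ρ * (y - x)))) ∧
      ∫ y, f y * (ρ * KK (ρ * (y - x))) = ∫ u, f (x + u / ρ) * KK u := by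
    intro ρ hρ
    have hρp : 0 < ρ := by linarith
    have e : (fun y => f y * (ρ * KK (ρ * (y - x)))) =
        fun y => (fun z => (ρ : ℂ) * (fun u => f (x + u / ρ) * KK u) (ρ * z)) (y - x) := by
      ext y
      have : x + ρ * (y - x) / ρ = y := by field_simp; ring
      simp only [this]
      ring
    rw [e]
    constructor
    · apply Integrable.comp_sub_right (f := (fun z => (ρ : ℂ) * (fun u => f (x + u / ρ) * KK u) (ρ * z)))
      exact ((hint ρ hρ).comp_mul_left' hρp.ne').const_mul _
    · rw [integral_sub_right_eq_self (fun z => (ρ : ℂ) * (fun u => f (x + u / ρ) * KK u) (ρ * z)),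
        integral_const_mul, Measure.integral_comp_mul_left (fun u => f (x + u / ρ) * KK u) ρ, abs_of_pos (by positivity), Complex.real_smul,
        ← mul_assoc]
      have : (ρ : ℂ) ≠ 0 := by exact_mod_cast hρp.ne'
      push_cast
      rw [mul_inv_cancel₀ this, one_mul]
  let φ : ℝ → ℂ := fun v => Complex.exp (↑(2 * π * v * x) * I) * bmpC (v / r)
    - Complex.exp (↑(2 * π * v * x) * I) * bmpC (v / R1)
  have hφc : ContDiff ℝ (↑(⊤ : ℕ∞)) φ := by
    have h1 : ContDiff ℝ (↑(⊤ : ℕ∞)) (fun v : ℝ => Complex.exp (↑(2 * π * v * x) * I)) := by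
      apply ContDiff.cexp
      apply ContDiff.mul _ contDiff_const
      have h2 : ContDiff ℝ (↑(⊤ : ℕ∞)) (fun v : ℝ => 2 * π * v * x) := by fun_prop
      exact Complex.ofRealCLM.contDiff.comp h2
    exact (h1.mul (bmpC_contDiff'.comp (by fun_prop))).sub (h1.mul (bmpC_contDiff'.comp (by fun_prop)))
  have hz : ∀ ρ v : ℝ, 0 < ρ → 3 * ρ ≤ |v| → bmpC (v / ρ) = 0 := by
    intro ρ v hρ h
    apply bmpC_zero
    rw [abs_div, abs_of_pos hρ, le_div_iff₀ hρ]
    exact h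
  have ho : ∀ ρ v : ℝ, 0 < ρ → |v| ≤ 2 * ρ → bmpC (v / ρ) = 1 := by
    intro ρ v hρ h
    apply bmpC_one
    rw [abs_div, abs_of_pos hρ, div_le_iff₀ hρ]
    exact h
  have hφs : HasCompactSupport φ := by
    refine HasCompactSupport.intro (isCompact_Icc (a := -(3 * r)) (b := 3 * r)) fun v hv => ?_
    have : 3 * r ≤ |v| := by
      by_contra h
      push Not at h
      exact hv ⟨(abs_lt.1 h).1.le, (abs_lt.1 h).2.le⟩
    simp only [φ]
    rw [hz r v hrp this, hz R1 v hR1p (by linarith)]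
    simp
  have hdis : Disjoint (tsupport φ) (Set.Icc (-R) R) := by
    rw [Set.disjoint_left]
    intro v hv hv2
    have hab : |v| < 2 * R1 := by
      have := abs_le.2 hv2
      linarith
    exact absurd hv (by
      rw [notMem_tsupport_iff_eventuallyEq]
      have : {w : ℝ | |w| < 2 * R1} ∈ nhds v := (isOpen_lt continuous_abs continuous_const).mem_nhds hab
      filter_upwards [this] with w hw
      have hw' : |w| < 2 * R1 := hw
      simp only [φ, Pi.zero_apply]
      rw [ho r w hrp (by linarith), ho R1 w hR1p hw'.le, sub_self])
  have h0 := hF (hφs.toSchwartzMap hφc) hdis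
  have hFT : ∀ y, 𝓕 ((hφs.toSchwartzMap hφc : 𝓢(ℝ, ℂ)) : ℝ → ℂ) y =
      r * KK (r * (y - x)) - R1 * KK (R1 * (y - x)) := by
    intro y
    rw [Real.fourier_real_eq_integral_exp_smul, ← fourier_piece r x y hrp, ← fourier_piece R1 x y hR1p,
      ← integral_sub]
    · congr 1
      ext v
      change _ • φ v = _
      simp only [φ, smul_eq_mul, mul_sub]
    all_goals
      apply Continuous.integrable_of_hasCompactSupport
      · have := bmpC_contDiff'.continuous
        fun_prop
      · refine HasCompactSupport.intro (isCompact_Icc (a := -(3 * r)) (b := 3 * r)) fun v hv => ?_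
        have : 3 * r ≤ |v| := by
          by_contra h
          push Not at h
          exact hv ⟨(abs_lt.1 h).1.le, (abs_lt.1 h).2.le⟩
        first
          | rw [hz r v hrp this]; simp
          | rw [hz R1 v hR1p (by linarith)]; simp
  have hsub : ∀ y, f y * (r * KK (r * (y - x)) - R1 * KK (R1 * (y - x))) =
      f y * (r * KK (r * (y - x))) - f y * (R1 * KK (R1 * (y - x))) := fun y => mul_sub _ _ _
  simp_rw [hFT, hsub] at h0
  rw [integral_sub (key r (by linarith)).1 (key R1 h11).1, (key r (by linarith)).2, (key R1 h11).2] at h0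
  exact sub_eq_zero.1 h0

lemma repro (f : ℝ → ℂ) (R x : ℝ) (hR : 0 < R) (hf : InER R f) (R1 : ℝ) (hR1 : R ≤ R1) (h11 : 1 ≤ R1) :
    f x = ∫ u, f (x + u / R1) * KK u := by
  have hlim : Tendsto (fun r : ℝ => ∫ u, f (x + u / r) * KK u) atTop (nhds (∫ u, f x * KK u)) := by
    obtain ⟨hc, ⟨D, k, hD⟩, hF⟩ := hf
    obtain ⟨A, hA⟩ := dom_aux f D k hD KK x
    refine tendsto_integral_filter_of_dominated_convergence (fun u => A * ((1 + |u|)⁻¹) ^ 2) ?_ ?_ ?_ ?_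
    · refine Eventually.of_forall fun r => ?_
      exact ((hc.comp (by fun_prop)).mul KK.continuous).aestronglyMeasurable
    · filter_upwards [eventually_ge_atTop 1] with r hr
      exact ae_of_all _ (hA r hr)
    · exact inv_one_add_sq_integrable.const_mul A
    · refine ae_of_all _ fun u => ?_
      apply Tendsto.mul_const
      have h1 : Tendsto (fun r : ℝ => x + u / r) atTop (nhds (x + 0)) :=
        tendsto_const_nhds.add (tendsto_const_nhds.div_atTop tendsto_id)
      rw [add_zero] at h1
      exact (hc.tendsto x).comp h1
  have hconst : Tendsto (fun r : ℝ => ∫ u, f (x + u / r) * KK u) atTop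
      (nhds (∫ u, f (x + u / R1) * KK u)) := by
    apply tendsto_const_nhds.congr'
    filter_upwards [eventually_ge_atTop R1] with r hr
    exact (I_const f R r x hR hf R1 hR1 h11 hr).symm
  have := tendsto_nhds_unique hlim hconst
  rw [integral_const_mul, KK_int, mul_one] at this
  exact this

noncomputable def rho (u : ℝ) : ℝ≥0∞ := ENNReal.ofReal ((1 + |u|)⁻¹)

lemma rho_le_one (u : ℝ) : rho u ≤ 1 := by
  unfold rho
  rw [← ENNReal.ofReal_one]
  apply ENNReal.ofReal_le_ofReal
  exact inv_le_one_of_one_le₀ (by linarith [abs_nonneg u])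

lemma rho_ne_top (u : ℝ) : rho u ≠ ∞ := ENNReal.ofReal_ne_top

lemma rho_zero : rho 0 = 1 := by simp [rho]

lemma rho_measurable : Measurable rho := by
  unfold rho
  fun_prop

lemma rho_mul_le (x y z : ℝ) : rho (z - y) * rho (y - x) ≤ rho (z - x) := by
  unfold rho
  rw [← ENNReal.ofReal_mul (by positivity), ← mul_inv]
  apply ENNReal.ofReal_le_ofReal
  apply inv_anti₀ (by positivity)
  have := abs_add_le (z - y) (y - x)
  rw [sub_add_sub_cancel] at this
  nlinarith [mul_nonneg (abs_nonneg (z - y)) (abs_nonneg (y - x))]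

lemma peetre (G : ℝ → ℝ≥0∞) (B : ℝ≥0∞) (N : ℕ) (s : ℝ) (hs : 0 < s) (hs1 : s ≤ 1)
    (hrep : ∀ y, G y ≤ B * ∫⁻ z, G z * rho (z - y) ^ N) (x : ℝ)
    (hM : ∃ M0 : ℝ≥0∞, M0 ≠ ∞ ∧ ∀ y, G y * rho (y - x) ^ N ≤ M0) :
    G x ^ s ≤ B * ∫⁻ z, (G z * rho (z - x) ^ N) ^ s := by
  obtain ⟨M0, hM0, hM⟩ := hM
  set M := ⨆ y, G y * rho (y - x) ^ N with hMdef
  have hMtop : M ≠ ∞ := ne_top_of_le_ne_top hM0 (iSup_le hM)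
  have hle : ∀ y, G y * rho (y - x) ^ N ≤ M := fun y => le_iSup (fun y => G y * rho (y - x) ^ N) y
  have hGx : G x ≤ M := by simpa [rho_zero] using hle x
  have h1s : 0 ≤ 1 - s := by linarith
  have hb : ∫⁻ z, G z * rho (z - x) ^ N ≤ (∫⁻ z, (G z * rho (z - x) ^ N) ^ s) * M ^ (1 - s) := by
    rw [← lintegral_mul_const' _ _ (ENNReal.rpow_ne_top_of_nonneg h1s hMtop)]
    apply lintegral_mono
    intro z
    calc G z * rho (z - x) ^ N = (G z * rho (z - x) ^ N) ^ s * (G z * rho (z - x) ^ N) ^ (1 - s) := by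
          rw [← ENNReal.rpow_add_of_nonneg _ _ hs.le h1s]; simp
      _ ≤ _ := mul_le_mul_right (ENNReal.rpow_le_rpow (hle z) h1s) _
  have hMle : M ≤ B * ((∫⁻ z, (G z * rho (z - x) ^ N) ^ s) * M ^ (1 - s)) := by
    refine le_trans ?_ (mul_le_mul_right hb B)
    apply iSup_le
    intro y
    calc G y * rho (y - x) ^ N ≤ (B * ∫⁻ z, G z * rho (z - y) ^ N) * rho (y - x) ^ N := by
          gcongr; exact hrep y
      _ = B * ∫⁻ z, G z * rho (z - y) ^ N * rho (y - x) ^ N := by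
          rw [mul_assoc, lintegral_mul_const' _ _ (ENNReal.pow_ne_top (rho_ne_top _))]
      _ ≤ _ := by
          refine mul_le_mul_right (lintegral_mono fun z => ?_) _
          simp only
          rw [mul_assoc, ← mul_pow]
          gcongr
          exact rho_mul_le x y z
  by_cases hM00 : M = 0
  · have : G x = 0 := le_antisymm (hM00 ▸ hGx) (zero_le)
    rw [this, ENNReal.zero_rpow_of_pos hs]
    exact zero_le
  · refine (ENNReal.rpow_le_rpow hGx hs.le).trans ?_
    have hne : M ^ (1 - s) ≠ 0 := (ENNReal.rpow_pos (pos_iff_ne_zero.2 hM00) hMtop).ne'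
    have hnt : M ^ (1 - s) ≠ ∞ := ENNReal.rpow_ne_top_of_nonneg h1s hMtop
    rw [← ENNReal.mul_le_mul_iff_left hne hnt, ← ENNReal.rpow_add_of_nonneg _ _ hs.le h1s]
    simpa [mul_assoc] using hMle

lemma peetre' (G : ℝ → ℝ≥0∞) (B : ℝ≥0∞) (N : ℕ) (s : ℝ) (hs : 0 < s) (hs1 : s ≤ 1) (hN : 2 ≤ N * s)
    (hrep : ∀ y, G y ≤ B * ∫⁻ z, G z * rho (z - y) ^ N) (x : ℝ)
    (hM : ∃ M0 : ℝ≥0∞, M0 ≠ ∞ ∧ ∀ y, G y * rho (y - x) ^ N ≤ M0) :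
    G x ^ s ≤ B * ∫⁻ z, G z ^ s * rho (z - x) ^ 2 := by
  refine (peetre G B N s hs hs1 hrep x hM).trans ?_
  gcongr with z
  rw [ENNReal.mul_rpow_of_nonneg _ _ hs.le]
  gcongr
  rw [← ENNReal.rpow_natCast, ← ENNReal.rpow_mul, ← ENNReal.rpow_two]
  exact ENNReal.rpow_le_rpow_of_exponent_ge (rho_le_one _) hN

noncomputable def c1 : ℝ≥0∞ := ∫⁻ z, rho z ^ 2

lemma c1_ne_top : c1 ≠ ∞ := by
  have := inv_one_add_sq_integrable.lintegral_lt_top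
  unfold c1 rho
  refine ne_top_of_le_ne_top this.ne (lintegral_mono fun z => ?_)
  rw [ENNReal.ofReal_pow (by positivity)]

lemma c1_shift (x : ℝ) : ∫⁻ z, rho (z - x) ^ 2 = c1 :=
  lintegral_sub_right_eq_self (fun z => rho z ^ 2) x

noncomputable def c2 : ℝ≥0∞ := 4 * ∑' n : ℤ, rho n ^ 2

lemma c2_ne_top : c2 ≠ ∞ := by
  unfold c2
  apply ENNReal.mul_ne_top (by simp)
  have h1 : Summable (fun n : ℤ => ((1 + |(n : ℝ)|)⁻¹) ^ 2) := by
    have hN : Summable (fun n : ℕ => ((1 + (n : ℝ))⁻¹) ^ 2) := by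
      have := (summable_nat_add_iff 1).2 (Real.summable_nat_pow_inv.2 (one_lt_two))
      refine this.congr fun n => ?_
      push_cast
      rw [inv_pow, add_comm]
    apply Summable.of_nat_of_neg
    · simpa using hN
    · simpa using hN
  have := h1.tsum_ofReal_ne_top
  refine ne_top_of_le_ne_top this (ENNReal.tsum_le_tsum fun n => ?_)
  rw [rho, ENNReal.ofReal_pow (by positivity)]

lemma c2_sum (R : ℝ) (hR : 1 ≤ R) (z : ℝ) : ∑' n : ℤ, rho (z - R * n) ^ 2 ≤ c2 := by
  set m := round (z / R)
  have hRp : 0 < R := by linarith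
  have key : ∀ n : ℤ, rho (z - R * n) ^ 2 ≤ 4 * rho ((n - m : ℤ) : ℝ) ^ 2 := by
    intro n
    have h1 : rho (z - R * n) ≤ 2 * rho ((n - m : ℤ) : ℝ) := by
      unfold rho
      rw [← ENNReal.ofReal_ofNat 2, ← ENNReal.ofReal_mul (by norm_num)]
      apply ENNReal.ofReal_le_ofReal
      rw [← div_eq_mul_inv, inv_eq_one_div, div_le_div_iff₀ (by positivity) (by positivity)]
      have h2 : |z / R - m| ≤ 1 / 2 := abs_sub_round _
      have h3 : |z / R - n| ≤ |z - R * n| := by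
        have : z - R * n = R * (z / R - n) := by field_simp
        rw [this, abs_mul, abs_of_pos hRp]
        exact le_mul_of_one_le_left (abs_nonneg _) hR
      have h4 : |((n - m : ℤ) : ℝ)| ≤ |z / R - m| + |z / R - n| := by
        have : ((n - m : ℤ) : ℝ) = (z / R - m) - (z / R - n) := by push_cast; ring
        rw [this]
        exact abs_sub _ _
      linarith [abs_nonneg ((n - m : ℤ) : ℝ)]
    calc rho (z - R * n) ^ 2 ≤ (2 * rho ((n - m : ℤ) : ℝ)) ^ 2 := by gcongr
      _ = _ := by rw [mul_pow]; norm_num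
  calc ∑' n : ℤ, rho (z - R * n) ^ 2 ≤ ∑' n : ℤ, 4 * rho ((n - m : ℤ) : ℝ) ^ 2 := ENNReal.tsum_le_tsum key
    _ = 4 * ∑' n : ℤ, rho ((n - m : ℤ) : ℝ) ^ 2 := ENNReal.tsum_mul_left
    _ = c2 := by
      rw [c2]
      congr 1
      exact (Equiv.subRight m).tsum_eq (fun n : ℤ => rho (n : ℝ) ^ 2)

noncomputable def HH (G : ℝ → ℝ≥0∞) (s τ : ℝ) (z : ℝ) : ℝ≥0∞ :=
  ∑' k : ℕ, Set.indicator {x | ENNReal.ofReal (2 ^ k * τ) < G x}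
    (fun _ => ENNReal.ofReal ((2 ^ (k + 1) * τ) ^ s)) z

noncomputable def TT (G : ℝ → ℝ≥0∞) (s τ : ℝ) : ℝ≥0∞ :=
  ∑' k : ℕ, ENNReal.ofReal ((2 ^ (k + 1) * τ) ^ s) * distFn volume G (2 ^ k * τ)

lemma HH_meas (G : ℝ → ℝ≥0∞) (hG : Measurable G) (s τ : ℝ) : Measurable (HH G s τ) := by
  unfold HH
  refine Measurable.tsum fun k => ?_
  exact measurable_const.indicator (measurableSet_lt measurable_const hG)

lemma HH_int (G : ℝ → ℝ≥0∞) (hG : Measurable G) (s τ : ℝ) : ∫⁻ z, HH G s τ z = TT G s τ := by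
  unfold HH TT
  rw [lintegral_tsum fun k =>
    (measurable_const.indicator (measurableSet_lt measurable_const hG)).aemeasurable]
  congr 1
  ext k
  rw [lintegral_indicator_const (measurableSet_lt measurable_const hG)]
  rfl

lemma G_le_HH (G : ℝ → ℝ≥0∞) (s τ : ℝ) (hs : 0 < s) (hτ : 0 < τ) (z : ℝ) (hz : G z ≠ ∞) :
    G z ^ s ≤ ENNReal.ofReal (τ ^ s) + HH G s τ z := by
  have hex : ∃ n : ℕ, G z ≤ ENNReal.ofReal (2 ^ n * τ) := by
    obtain ⟨n, hn⟩ := pow_unbounded_of_one_lt ((G z).toReal / τ) (one_lt_two)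
    refine ⟨n, ?_⟩
    rw [← ENNReal.ofReal_toReal hz]
    apply ENNReal.ofReal_le_ofReal
    rw [div_lt_iff₀ hτ] at hn
    exact hn.le
  classical
  have hn := Nat.find_spec hex
  rcases hm : Nat.find hex with _ | k
  · rw [hm] at hn
    refine le_trans ?_ le_self_add
    rw [← ENNReal.ofReal_rpow_of_pos hτ]
    exact ENNReal.rpow_le_rpow (by simpa using hn) hs.le
  · rw [hm] at hn
    have hlt : ENNReal.ofReal (2 ^ k * τ) < G z := by
      have := Nat.find_min hex (m := k) (by omega)
      exact not_le.1 this
    refine le_trans ?_ le_add_self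
    refine le_trans ?_ (ENNReal.le_tsum k)
    rw [Set.indicator_of_mem (by exact hlt), ← ENNReal.ofReal_rpow_of_pos (by positivity)]
    exact ENNReal.rpow_le_rpow hn hs.le

lemma G_split (G : ℝ → ℝ≥0∞) (hG : Measurable G) (hfin : ∀ z, G z ≠ ∞) (s τ : ℝ) (hs : 0 < s) (hτ : 0 < τ)
    (B : ℝ≥0∞) (hP : ∀ x, G x ^ s ≤ B * ∫⁻ z, G z ^ s * rho (z - x) ^ 2) (x : ℝ) :
    G x ^ s ≤ B * c1 * ENNReal.ofReal (τ ^ s) + B * ∫⁻ z, HH G s τ z * rho (z - x) ^ 2 := by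
  have hr : Measurable fun z => rho (z - x) ^ 2 := (rho_measurable.comp (measurable_id.sub_const x)).pow_const 2
  calc G x ^ s ≤ B * ∫⁻ z, G z ^ s * rho (z - x) ^ 2 := hP x
    _ ≤ B * ∫⁻ z, (ENNReal.ofReal (τ ^ s) * rho (z - x) ^ 2 + HH G s τ z * rho (z - x) ^ 2) := by
        gcongr with z
        rw [← add_mul]
        gcongr
        exact G_le_HH G s τ hs hτ z (hfin z)
    _ = _ := by
        rw [lintegral_add_left (hr.const_mul _), lintegral_const_mul _ hr, c1_shift]
        ring

lemma G_bdd (G : ℝ → ℝ≥0∞) (hG : Measurable G) (hfin : ∀ z, G z ≠ ∞) (s : ℝ) (hs : 0 < s)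
    (B : ℝ≥0∞) (hB : B ≠ ∞) (hP : ∀ x, G x ^ s ≤ B * ∫⁻ z, G z ^ s * rho (z - x) ^ 2)
    (hT : TT G s 1 ≠ ∞) : ∃ M0 : ℝ≥0∞, M0 ≠ ∞ ∧ ∀ y, G y ≤ M0 := by
  refine ⟨(B * c1 + B * TT G s 1) ^ (s⁻¹), ?_, fun y => ?_⟩
  · apply ENNReal.rpow_ne_top_of_nonneg (by positivity)
    exact ENNReal.add_ne_top.2 ⟨ENNReal.mul_ne_top hB c1_ne_top, ENNReal.mul_ne_top hB hT⟩
  · rw [ENNReal.le_rpow_inv_iff hs]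
    refine (G_split G hG hfin s 1 hs one_pos B hP y).trans ?_
    rw [← HH_int G hG]
    simp only [Real.one_rpow, ENNReal.ofReal_one, mul_one]
    gcongr with z
    exact mul_le_of_le_one_right' (pow_le_one' (rho_le_one _) 2)

lemma count_le (G : ℝ → ℝ≥0∞) (hG : Measurable G) (hfin : ∀ z, G z ≠ ∞) (s : ℝ) (hs : 0 < s)
    (B : ℝ≥0∞) (hP : ∀ x, G x ^ s ≤ B * ∫⁻ z, G z ^ s * rho (z - x) ^ 2)
    (c : ℝ) (hc : 0 < c) (hc2 : B * c1 * ENNReal.ofReal (c ^ s) ≤ 1 / 2) (R : ℝ) (hR : 1 ≤ R)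
    (t : ℝ) (ht : 0 < t) :
    distFn Measure.count (fun n : ℤ => G (R * n)) t ≤
      (2 * B * c2 * ENNReal.ofReal ((2 * c) ^ s)) *
        ∑' k : ℕ, ENNReal.ofReal ((2 ^ k) ^ s) * distFn volume G (2 ^ k * (c * t)) := by
  set L := ENNReal.ofReal (t ^ s) with hL
  have hts : 0 < t ^ s := Real.rpow_pos_of_pos ht s
  have hL0 : L ≠ 0 := by simpa [hL] using hts
  have hLt : L ≠ ∞ := ENNReal.ofReal_ne_top
  set S := {n : ℤ | ENNReal.ofReal t < G (R * n)} with hS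
  have h1 : ∀ n ∈ S, L / 2 ≤ B * ∫⁻ z, HH G s (c * t) z * rho (z - R * n) ^ 2 := by
    intro n hn
    have h2 := G_split G hG hfin s (c * t) hs (by positivity) B hP (R * n)
    have h3 : L ≤ G (R * n) ^ s := by
      rw [hL, ← ENNReal.ofReal_rpow_of_pos ht]
      exact ENNReal.rpow_le_rpow (le_of_lt hn) hs.le
    have h4 : B * c1 * ENNReal.ofReal ((c * t) ^ s) ≤ L / 2 := by
      rw [Real.mul_rpow hc.le ht.le, ENNReal.ofReal_mul (by positivity), ← mul_assoc]
      calc _ ≤ 1 / 2 * L := by gcongr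
        _ = L / 2 := by rw [ENNReal.div_eq_inv_mul, ENNReal.div_eq_inv_mul, mul_one]
    have h5 := (h3.trans h2).trans (add_le_add_left h4 _)
    nth_rewrite 1 [← ENNReal.add_halves L] at h5
    exact (ENNReal.add_le_add_iff_left (ENNReal.div_ne_top hLt (by simp))).1 h5
  have hcount : Measure.count S = ∑' n : ℤ, S.indicator (fun _ => (1 : ℝ≥0∞)) n := by
    rw [← lintegral_count, lintegral_indicator (by measurability)]
    simp
  have h6 : Measure.count S * (L / 2) ≤ B * c2 * TT G s (c * t) := by
    calc Measure.count S * (L / 2) = ∑' n : ℤ, S.indicator (fun _ => (1 : ℝ≥0∞)) n * (L / 2) := by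
          rw [hcount, ENNReal.tsum_mul_right]
      _ ≤ ∑' n : ℤ, B * ∫⁻ z, HH G s (c * t) z * rho (z - R * n) ^ 2 := by
          apply ENNReal.tsum_le_tsum
          intro n
          by_cases hn : n ∈ S
          · rw [Set.indicator_of_mem hn, one_mul]; exact h1 n hn
          · rw [Set.indicator_of_notMem hn, zero_mul]; exact zero_le
      _ = B * ∫⁻ z, ∑' n : ℤ, HH G s (c * t) z * rho (z - R * n) ^ 2 := by
          rw [ENNReal.tsum_mul_left, lintegral_tsum]
          intro n
          exact ((HH_meas G hG s _).mul
            ((rho_measurable.comp (measurable_id.sub_const _)).pow_const 2)).aemeasurable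
      _ ≤ B * ∫⁻ z, HH G s (c * t) z * c2 := by
          gcongr with z
          rw [ENNReal.tsum_mul_left]
          gcongr
          exact c2_sum R hR z
      _ = _ := by
          rw [lintegral_mul_const' _ _ c2_ne_top, HH_int G hG]; ring
  have h7 : TT G s (c * t) = ENNReal.ofReal ((2 * c) ^ s) * L *
      ∑' k : ℕ, ENNReal.ofReal ((2 ^ k) ^ s) * distFn volume G (2 ^ k * (c * t)) := by
    unfold TT
    rw [← ENNReal.tsum_mul_left]
    congr 1
    ext k
    have : ((2 : ℝ) ^ (k + 1) * (c * t)) ^ s = (2 * c) ^ s * t ^ s * (2 ^ k) ^ s := by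
      rw [← Real.mul_rpow (by positivity) (by positivity), ← Real.mul_rpow (by positivity) (by positivity)]
      congr 1
      ring
    rw [this, ENNReal.ofReal_mul (by positivity), ENNReal.ofReal_mul (by positivity)]
    ring
  rw [h7] at h6
  have hL2 : L / 2 * 2 = L := ENNReal.div_mul_cancel (by simp) (by simp)
  rw [← ENNReal.mul_le_mul_iff_left hL0 hLt]
  change Measure.count S * L ≤ _
  calc Measure.count S * L = Measure.count S * (L / 2) * 2 := by rw [mul_assoc, hL2]
    _ ≤ _ := mul_le_mul_left h6 2
    _ = _ := by ring

lemma geom_ne_top (e : ℝ) (he : e < 0) : ∑' k : ℕ, ENNReal.ofReal (((2 : ℝ) ^ k) ^ e) ≠ ∞ := by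
  have h : ∀ k : ℕ, ((2 : ℝ) ^ k) ^ e = ((2 : ℝ) ^ e) ^ k := by
    intro k
    rw [← Real.rpow_natCast, ← Real.rpow_mul (by norm_num), mul_comm, Real.rpow_mul (by norm_num),
      Real.rpow_natCast]
  simp_rw [h]
  apply Summable.tsum_ofReal_ne_top
  exact summable_geometric_of_lt_one (by positivity) (Real.rpow_lt_one_of_one_lt_of_neg one_lt_two he)

lemma lor_top {X : Type*} [MeasurableSpace X] (μ : Measure X) (q : ℝ≥0∞) (hq : 0 < q) (F : X → ℝ≥0∞) :
    lorentzNorm μ ∞ q F = ∞ := by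
  unfold lorentzNorm
  split_ifs with h
  · simp only [ENNReal.toReal_top, div_zero, ENNReal.rpow_zero, mul_one]
    refine ENNReal.eq_top_of_forall_nnreal_le fun r => ?_
    refine le_trans ?_ (le_iSup₂ (f := fun (t : ℝ) (_ : t ∈ Set.Ioi (0 : ℝ)) => ENNReal.ofReal t)
      ((r : ℝ) + 1) (by simp only [Set.mem_Ioi]; positivity))
    rw [← ENNReal.ofReal_coe_nnreal]
    exact ENNReal.ofReal_le_ofReal (by linarith)
  · simp only [ENNReal.toReal_top, div_zero, ENNReal.rpow_zero, mul_one]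
    have hqr : 0 < q.toReal := ENNReal.toReal_pos hq.ne' h
    have : ∫⁻ t in Set.Ioi (0 : ℝ), ENNReal.ofReal (t ^ (q.toReal - 1)) = ∞ := by
      by_contra hne
      have hm : AEStronglyMeasurable (fun t : ℝ => t ^ (q.toReal - 1)) (volume.restrict (Set.Ioi (0 : ℝ))) := by
        have : Measurable (fun t : ℝ => t ^ (q.toReal - 1)) := by fun_prop
        exact this.aestronglyMeasurable
      have h0 : 0 ≤ᵐ[volume.restrict (Set.Ioi (0 : ℝ))] (fun t : ℝ => t ^ (q.toReal - 1)) := by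
        filter_upwards [ae_restrict_mem measurableSet_Ioi] with t ht
        exact Real.rpow_nonneg (le_of_lt ht) _
      exact not_integrableOn_Ioi_rpow _ ((lintegral_ofReal_ne_top_iff_integrable hm h0).1 hne)
    rw [this, ENNReal.mul_top hq.ne', ENNReal.top_rpow_of_pos (by positivity)]

lemma distFn_anti {X : Type*} [MeasurableSpace X] (μ : Measure X) (F : X → ℝ≥0∞) :
    Antitone (distFn μ F) := by
  intro a b hab
  unfold distFn
  apply measure_mono
  intro x hx
  exact lt_of_le_of_lt (ENNReal.ofReal_le_ofReal hab) hx

lemma lor_weak {X : Type*} [MeasurableSpace X] (μ : Measure X) (p q : ℝ≥0∞) (hp : 0 < p) (hp' : p ≠ ∞)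
    (hq : 0 < q) (F : X → ℝ≥0∞) (t : ℝ) (ht : 0 < t) :
    ENNReal.ofReal t * distFn μ F t ^ (1 / p.toReal) ≤ lorentzNorm μ p q F := by
  unfold lorentzNorm
  have hpr : 0 < p.toReal := ENNReal.toReal_pos hp.ne' hp'
  split_ifs with h
  · exact le_iSup₂ (f := fun (t : ℝ) (_ : t ∈ Set.Ioi (0 : ℝ)) =>
      ENNReal.ofReal t * distFn μ F t ^ (1 / p.toReal)) t ht
  · have hqr : 0 < q.toReal := ENNReal.toReal_pos hq.ne' h
    rw [one_div q.toReal, ENNReal.le_rpow_inv_iff hqr]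
    have hI : ∫⁻ u in Set.Ioc 0 t, ENNReal.ofReal (u ^ (q.toReal - 1)) = ENNReal.ofReal (t ^ q.toReal / q.toReal) := by
      rw [← ofReal_integral_eq_lintegral_ofReal]
      · rw [← intervalIntegral.integral_of_le ht.le, integral_rpow (Or.inl (by linarith))]
        simp [Real.zero_rpow hqr.ne']
      · have := (intervalIntegral.intervalIntegrable_rpow' (a := 0) (b := t) (r := q.toReal - 1) (by linarith))
        exact (intervalIntegrable_iff_integrableOn_Ioc_of_le ht.le).1 this
      · filter_upwards [ae_restrict_mem measurableSet_Ioc] with u hu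
        exact Real.rpow_nonneg hu.1.le _
    calc (ENNReal.ofReal t * distFn μ F t ^ (1 / p.toReal)) ^ q.toReal
        = ENNReal.ofReal (t ^ q.toReal) * distFn μ F t ^ (q.toReal / p.toReal) := by
          rw [ENNReal.mul_rpow_of_nonneg _ _ hqr.le, ENNReal.ofReal_rpow_of_pos ht, ← ENNReal.rpow_mul]
          congr 2
          ring
      _ = q * (ENNReal.ofReal (t ^ q.toReal / q.toReal) * distFn μ F t ^ (q.toReal / p.toReal)) := by
          rw [← mul_assoc]
          congr 1
          nth_rewrite 2 [← ENNReal.ofReal_toReal h]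
          rw [← ENNReal.ofReal_mul hqr.le]
          congr 1
          field_simp
      _ = q * ∫⁻ u in Set.Ioc 0 t, ENNReal.ofReal (u ^ (q.toReal - 1)) * distFn μ F t ^ (q.toReal / p.toReal) := by
          rw [lintegral_mul_const _ (by fun_prop), hI]
      _ ≤ q * ∫⁻ u in Set.Ioc 0 t, ENNReal.ofReal (u ^ (q.toReal - 1)) * distFn μ F u ^ (q.toReal / p.toReal) := by
          refine mul_le_mul_right (setLIntegral_mono' measurableSet_Ioc fun u hu => ?_) _
          refine mul_le_mul_right (ENNReal.rpow_le_rpow (distFn_anti μ F hu.2) (by positivity)) _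
      _ ≤ _ := mul_le_mul_right (lintegral_mono_set Set.Ioc_subset_Ioi_self) _

lemma lint_scale (q b : ℝ) (hb : 0 < b) (φ : ℝ → ℝ≥0∞) :
    ∫⁻ t in Set.Ioi (0 : ℝ), ENNReal.ofReal (t ^ (q - 1)) * φ (b * t) =
      ENNReal.ofReal (b ^ (-q)) * ∫⁻ t in Set.Ioi (0 : ℝ), ENNReal.ofReal (t ^ (q - 1)) * φ t := by
  have h := lintegral_image_eq_lintegral_abs_deriv_mul (s := Set.Ioi (0 : ℝ)) (f := fun t => b * t)
    (f' := fun _ => b) measurableSet_Ioi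
    (fun x _ => by simpa using ((hasDerivAt_id x).const_mul b).hasDerivWithinAt)
    (fun x _ y _ hxy => mul_left_cancel₀ hb.ne' hxy)
    (fun t => ENNReal.ofReal (t ^ (q - 1)) * φ t)
  have himg : (fun t => b * t) '' Set.Ioi (0 : ℝ) = Set.Ioi 0 := by
    rw [Set.image_mul_left_Ioi hb, mul_zero]
  rw [himg] at h
  rw [h, ← lintegral_const_mul' _ _ ENNReal.ofReal_ne_top]
  refine setLIntegral_congr_fun measurableSet_Ioi fun t ht => ?_
  have ht : 0 < t := ht
  rw [← mul_assoc, ← mul_assoc, abs_of_pos hb, ← ENNReal.ofReal_mul (by positivity),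
    ← ENNReal.ofReal_mul (by positivity)]
  congr 2
  rw [Real.mul_rpow hb.le ht.le]
  have : b ^ (-q) * b * b ^ (q - 1) = 1 := by
    nth_rewrite 2 [← Real.rpow_one b]
    rw [← Real.rpow_add hb, ← Real.rpow_add hb]
    simp
  linear_combination (-(t ^ (q - 1))) * this

lemma lor_main (p q : ℝ≥0∞) (hp : 0 < p) (hp' : p ≠ ∞) (hq : 0 < q) (s c : ℝ) (hs : 0 < s) (hc : 0 < c)
    (hsp : 2 * s < p.toReal) : ∃ C0 : ℝ≥0∞, C0 ≠ ∞ ∧ ∀ (A : ℝ≥0∞) (a : ℤ → ℝ≥0∞) (F : ℝ → ℝ≥0∞),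
      (∀ t : ℝ, 0 < t → distFn Measure.count a t ≤
        A * ∑' k : ℕ, ENNReal.ofReal ((2 ^ k) ^ s) * distFn volume F (2 ^ k * (c * t))) →
      lorentzNorm Measure.count p q a ≤ C0 * A ^ (1 / p.toReal) * lorentzNorm volume p q F := by
  have hpr : 0 < p.toReal := ENNReal.toReal_pos hp.ne' hp'
  set E : ℝ≥0∞ := ∑' k : ℕ, ENNReal.ofReal (((2 : ℝ) ^ k) ^ (-s)) with hE
  have hEt : E ≠ ∞ := geom_ne_top (-s) (by linarith)
  have hstep : ∀ (A : ℝ≥0∞) (a : ℤ → ℝ≥0∞) (F : ℝ → ℝ≥0∞),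
      (∀ t : ℝ, 0 < t → distFn Measure.count a t ≤
        A * ∑' k : ℕ, ENNReal.ofReal ((2 ^ k) ^ s) * distFn volume F (2 ^ k * (c * t))) →
      ∀ r : ℝ, 0 < r → ∀ t : ℝ, 0 < t → distFn Measure.count a t ^ r ≤
        E ^ r * A ^ r * ⨆ k : ℕ, ENNReal.ofReal ((2 ^ k) ^ (2 * s * r)) * distFn volume F (2 ^ k * (c * t)) ^ r := by
    intro A a F h r hr t ht
    have h1 : distFn Measure.count a t ≤
        E * A * ⨆ k : ℕ, ENNReal.ofReal ((2 ^ k) ^ (2 * s)) * distFn volume F (2 ^ k * (c * t)) := by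
      refine (h t ht).trans ?_
      rw [mul_comm E A, mul_assoc A E, hE, ← ENNReal.tsum_mul_right]
      refine mul_le_mul_right (ENNReal.tsum_le_tsum fun k => ?_) _
      refine le_trans (le_of_eq ?_) (mul_le_mul_right (le_iSup (fun k : ℕ =>
        ENNReal.ofReal ((2 ^ k) ^ (2 * s)) * distFn volume F (2 ^ k * (c * t))) k) _)
      rw [← mul_assoc (ENNReal.ofReal _) (ENNReal.ofReal _), ← ENNReal.ofReal_mul (by positivity), ← Real.rpow_add (by positivity)]
      congr 3
      ring
    refine (ENNReal.rpow_le_rpow h1 hr.le).trans (le_of_eq ?_)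
    rw [ENNReal.mul_rpow_of_nonneg _ _ hr.le, ENNReal.mul_rpow_of_nonneg _ _ hr.le]
    congr 1
    have := (ENNReal.orderIsoRpow r hr).map_iSup (fun k : ℕ =>
        ENNReal.ofReal ((2 ^ k) ^ (2 * s)) * distFn volume F (2 ^ k * (c * t)))
    simp only [ENNReal.orderIsoRpow_apply] at this
    rw [this]
    congr 1
    ext k
    rw [ENNReal.mul_rpow_of_nonneg _ _ hr.le, ENNReal.ofReal_rpow_of_pos (by positivity),
      ← Real.rpow_mul (by positivity)]
  by_cases hqt : q = ∞
  · refine ⟨E ^ (1 / p.toReal) * ENNReal.ofReal c⁻¹, ?_, ?_⟩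
    · exact ENNReal.mul_ne_top (ENNReal.rpow_ne_top_of_nonneg (by positivity) hEt) ENNReal.ofReal_ne_top
    · intro A a F h
      conv_lhs => unfold lorentzNorm
      rw [if_pos hqt]
      refine iSup₂_le fun t ht => ?_
      have ht : 0 < t := ht
      refine (mul_le_mul_right (hstep A a F h _ (by positivity) t ht) _).trans ?_
      have h2 : ENNReal.ofReal t * ⨆ k : ℕ, ENNReal.ofReal ((2 ^ k) ^ (2 * s * (1 / p.toReal))) *
          distFn volume F (2 ^ k * (c * t)) ^ (1 / p.toReal) ≤ ENNReal.ofReal c⁻¹ * lorentzNorm volume p q F := by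
        rw [ENNReal.mul_iSup]
        refine iSup_le fun k => ?_
        refine le_trans ?_ (mul_le_mul_right (lor_weak volume p q hp hp' hq F (2 ^ k * (c * t)) (by positivity)) _)
        rw [← mul_assoc (ENNReal.ofReal _) (ENNReal.ofReal _), ← mul_assoc (ENNReal.ofReal _) (ENNReal.ofReal _), ← ENNReal.ofReal_mul (by positivity), ← ENNReal.ofReal_mul (by positivity)]
        refine mul_le_mul_left (ENNReal.ofReal_le_ofReal ?_) _
        have : ((2 : ℝ) ^ k) ^ (2 * s * (1 / p.toReal)) ≤ 2 ^ k := by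
          nth_rewrite 2 [← Real.rpow_one (2 ^ k)]
          apply Real.rpow_le_rpow_of_exponent_le (one_le_pow₀ (by norm_num))
          rw [mul_one_div, div_le_one hpr]
          exact hsp.le
        calc t * ((2 : ℝ) ^ k) ^ (2 * s * (1 / p.toReal)) ≤ t * 2 ^ k := by gcongr
          _ = _ := by field_simp
      calc _ = E ^ (1 / p.toReal) * A ^ (1 / p.toReal) * (ENNReal.ofReal t * ⨆ k : ℕ, ENNReal.ofReal ((2 ^ k) ^ (2 * s * (1 / p.toReal))) *
          distFn volume F (2 ^ k * (c * t)) ^ (1 / p.toReal)) := by ring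
        _ ≤ _ := mul_le_mul_right h2 _
        _ = _ := by ring
  · have hqr : 0 < q.toReal := ENNReal.toReal_pos hq.ne' hqt
    set r := q.toReal / p.toReal with hr
    have hrp : 0 < r := by positivity
    set E2 : ℝ≥0∞ := ∑' k : ℕ, ENNReal.ofReal (((2 : ℝ) ^ k) ^ (2 * s * r)) * ENNReal.ofReal ((2 ^ k * c) ^ (-q.toReal)) with hE2
    have hE2t : E2 ≠ ∞ := by
      have : ∀ k : ℕ, ENNReal.ofReal (((2 : ℝ) ^ k) ^ (2 * s * r)) * ENNReal.ofReal ((2 ^ k * c) ^ (-q.toReal)) =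
          ENNReal.ofReal (((2 : ℝ) ^ k) ^ (2 * s * r - q.toReal)) * ENNReal.ofReal (c ^ (-q.toReal)) := by
        intro k
        rw [← ENNReal.ofReal_mul (by positivity), ← ENNReal.ofReal_mul (by positivity),
          Real.mul_rpow (by positivity) hc.le, ← mul_assoc, ← Real.rpow_add (by positivity)]
        rfl
      simp_rw [hE2, this]
      rw [ENNReal.tsum_mul_right]
      refine ENNReal.mul_ne_top (geom_ne_top _ ?_) ENNReal.ofReal_ne_top
      have : 2 * s * r < p.toReal * r := by gcongr
      have h3 : p.toReal * r = q.toReal := by rw [hr]; field_simp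
      linarith
    refine ⟨E ^ (1 / p.toReal) * E2 ^ (1 / q.toReal), ?_, ?_⟩
    · exact ENNReal.mul_ne_top (ENNReal.rpow_ne_top_of_nonneg (by positivity) hEt)
        (ENNReal.rpow_ne_top_of_nonneg (by positivity) hE2t)
    · intro A a F h
      unfold lorentzNorm
      rw [if_neg hqt, if_neg hqt]
      set J := ∫⁻ t in Set.Ioi (0 : ℝ), ENNReal.ofReal (t ^ (q.toReal - 1)) * distFn volume F t ^ r with hJ
      have hmain : ∫⁻ t in Set.Ioi (0 : ℝ), ENNReal.ofReal (t ^ (q.toReal - 1)) * distFn Measure.count a t ^ r ≤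
          E ^ r * A ^ r * (E2 * J) := by
        calc _ ≤ ∫⁻ t in Set.Ioi (0 : ℝ), E ^ r * A ^ r * ∑' k : ℕ, ENNReal.ofReal (((2 : ℝ) ^ k) ^ (2 * s * r)) *
                (ENNReal.ofReal (t ^ (q.toReal - 1)) * distFn volume F ((2 ^ k * c) * t) ^ r) := by
              refine setLIntegral_mono' measurableSet_Ioi fun t ht => ?_
              refine (mul_le_mul_right (hstep A a F h r hrp t ht) _).trans ?_
              rw [mul_left_comm]
              refine mul_le_mul_right ?_ _
              rw [ENNReal.mul_iSup]
              refine iSup_le fun k => ?_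
              refine le_trans (le_of_eq ?_) (ENNReal.le_tsum k)
              rw [← mul_assoc (2 ^ k) c t]
              ring
          _ = E ^ r * A ^ r * ∫⁻ t in Set.Ioi (0 : ℝ), ∑' k : ℕ, ENNReal.ofReal (((2 : ℝ) ^ k) ^ (2 * s * r)) *
                (ENNReal.ofReal (t ^ (q.toReal - 1)) * distFn volume F ((2 ^ k * c) * t) ^ r) := by
              rw [lintegral_const_mul]
              refine Measurable.tsum fun k => ?_
              have := (distFn_anti volume F).measurable
              fun_prop
          _ = E ^ r * A ^ r * ∑' k : ℕ, ENNReal.ofReal (((2 : ℝ) ^ k) ^ (2 * s * r)) *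
                (ENNReal.ofReal ((2 ^ k * c) ^ (-q.toReal)) * J) := by
              rw [lintegral_tsum]
              · congr 2
                ext k
                rw [lintegral_const_mul' _ _ ENNReal.ofReal_ne_top,
                  lint_scale q.toReal (2 ^ k * c) (by positivity) (fun t => distFn volume F t ^ r)]
              · intro k
                have := (distFn_anti volume F).measurable
                refine Measurable.aemeasurable ?_
                fun_prop
          _ = _ := by
              simp_rw [← mul_assoc (ENNReal.ofReal _) (ENNReal.ofReal _) J]
              rw [ENNReal.tsum_mul_right]
      have hq0 : 0 ≤ 1 / q.toReal := by positivity
      calc _ ≤ (q * (E ^ r * A ^ r * (E2 * J))) ^ (1 / q.toReal) :=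
            ENNReal.rpow_le_rpow (mul_le_mul_right hmain _) hq0
        _ = (E ^ r * A ^ r * E2 * (q * J)) ^ (1 / q.toReal) := by congr 1; ring
        _ = _ := by
            rw [ENNReal.mul_rpow_of_nonneg _ _ hq0, ENNReal.mul_rpow_of_nonneg _ _ hq0,
              ENNReal.mul_rpow_of_nonneg _ _ hq0, ← ENNReal.rpow_mul, ← ENNReal.rpow_mul]
            have : r * (1 / q.toReal) = 1 / p.toReal := by rw [hr]; field_simp
            rw [this]
            ring

lemma distFn_scale (F : ℝ → ℝ≥0∞) (R : ℝ) (hR : 0 < R) (t : ℝ) :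
    distFn volume (fun u => F (R⁻¹ * u)) t = ENNReal.ofReal R * distFn volume F t := by
  unfold distFn
  have := Real.volume_preimage_mul_left (a := R⁻¹) (inv_ne_zero hR.ne') {x | ENNReal.ofReal t < F x}
  rw [inv_inv, abs_of_pos hR] at this
  exact this

lemma hrep_aux (N : ℕ) : ∃ B : ℝ≥0∞, B ≠ ∞ ∧ ∀ (f : ℝ → ℂ) (R : ℝ), 0 < R → InER R f →
    ∀ R1 : ℝ, R ≤ R1 → 1 ≤ R1 → ∀ y : ℝ,
      (‖f (R1⁻¹ * y)‖₊ : ℝ≥0∞) ≤ B * ∫⁻ z, (‖f (R1⁻¹ * z)‖₊ : ℝ≥0∞) * rho (z - y) ^ N := by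
  obtain ⟨B, hB, hK⟩ := schwartz_decay KK N
  refine ⟨ENNReal.ofReal B, ENNReal.ofReal_ne_top, fun f R hR hf R1 hR1 h11 y => ?_⟩
  have h := repro f R (R1⁻¹ * y) hR hf R1 hR1 h11
  have hK' : ∀ u, ‖KK u‖ₑ ≤ ENNReal.ofReal B * rho u ^ N := by
    intro u
    rw [rho, ← ENNReal.ofReal_pow (by positivity), ← ENNReal.ofReal_mul hB.le, ← ofReal_norm]
    exact ENNReal.ofReal_le_ofReal (hK u)
  calc (‖f (R1⁻¹ * y)‖₊ : ℝ≥0∞) = ‖∫ u, f (R1⁻¹ * y + u / R1) * KK u‖ₑ := by rw [← h]; rfl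
    _ ≤ ∫⁻ u, ‖f (R1⁻¹ * y + u / R1) * KK u‖ₑ := enorm_integral_le_lintegral_enorm _
    _ ≤ ∫⁻ u, ENNReal.ofReal B * ((‖f (R1⁻¹ * (y + u))‖₊ : ℝ≥0∞) * rho ((y + u) - y) ^ N) := by
        refine lintegral_mono fun u => ?_
        have e1 : R1⁻¹ * y + u / R1 = R1⁻¹ * (y + u) := by ring
        have e2 : y + u - y = u := by ring
        simp only [e1, e2, enorm_mul]
        calc _ ≤ ‖f (R1⁻¹ * (y + u))‖ₑ * (ENNReal.ofReal B * rho u ^ N) := mul_le_mul_right (hK' u) _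
          _ = _ := by rw [mul_left_comm]; rfl
    _ = ENNReal.ofReal B * ∫⁻ u, (‖f (R1⁻¹ * (y + u))‖₊ : ℝ≥0∞) * rho ((y + u) - y) ^ N :=
        lintegral_const_mul' _ _ ENNReal.ofReal_ne_top
    _ = _ := by
        rw [lintegral_add_left_eq_self (fun z => (‖f (R1⁻¹ * z)‖₊ : ℝ≥0∞) * rho (z - y) ^ N) y]

lemma growth_aux (f : ℝ → ℂ) (R : ℝ) (hf : InER R f) (R1 : ℝ) (h11 : 1 ≤ R1) :
    ∃ k : ℕ, ∀ N, k ≤ N → ∀ x : ℝ, ∃ M0 : ℝ≥0∞, M0 ≠ ∞ ∧ ∀ y,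
      (‖f (R1⁻¹ * y)‖₊ : ℝ≥0∞) * rho (y - x) ^ N ≤ M0 := by
  obtain ⟨hc, ⟨D, k, hD⟩, hF⟩ := hf
  have hD0 : 0 ≤ D := by
    have := (norm_nonneg _).trans (hD 0)
    simpa using this
  refine ⟨k, fun N hN x => ⟨ENNReal.ofReal (D * (1 + |x|) ^ k), ENNReal.ofReal_ne_top, fun y => ?_⟩⟩
  have h0 : rho (y - x) ^ N ≤ rho (y - x) ^ k := pow_le_pow_right_of_le_one' (rho_le_one _) hN
  refine (mul_le_mul_right h0 _).trans ?_
  have h1 : (‖f (R1⁻¹ * y)‖₊ : ℝ≥0∞) = ENNReal.ofReal ‖f (R1⁻¹ * y)‖ := (ofReal_norm _).symm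
  rw [h1, rho, ← ENNReal.ofReal_pow (by positivity), ← ENNReal.ofReal_mul (by positivity)]
  apply ENNReal.ofReal_le_ofReal
  have h2 : 1 + |R1⁻¹ * y| ≤ (1 + |x|) * (1 + |y - x|) := by
    have h3 : |R1⁻¹ * y| ≤ |y| := by
      rw [abs_mul, abs_of_pos (by positivity)]
      exact mul_le_of_le_one_left (abs_nonneg _) (inv_le_one_of_one_le₀ h11)
    have h4 := abs_add_le x (y - x)
    rw [add_sub_cancel] at h4
    nlinarith [mul_nonneg (abs_nonneg x) (abs_nonneg (y - x))]
  have hne : 1 + |y - x| ≠ 0 := by positivity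
  calc ‖f (R1⁻¹ * y)‖ * ((1 + |y - x|)⁻¹) ^ k ≤ (D * ((1 + |x|) * (1 + |y - x|)) ^ k) * ((1 + |y - x|)⁻¹) ^ k := by
        gcongr
        exact (hD _).trans (by gcongr)
    _ = D * (1 + |x|) ^ k := by
        rw [mul_pow, mul_assoc, mul_assoc, ← mul_pow (1 + |y - x|), mul_inv_cancel₀ hne]
        ring

lemma TT_fin (p q : ℝ≥0∞) (hp : 0 < p) (hp' : p ≠ ∞) (hq : 0 < q) (s : ℝ)
    (hsp : s < p.toReal) (F : ℝ → ℝ≥0∞) (hF : lorentzNorm volume p q F ≠ ∞) (R : ℝ) (hR : 0 < R) :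
    TT (fun u => F (R⁻¹ * u)) s 1 ≠ ∞ := by
  have hpr : 0 < p.toReal := ENNReal.toReal_pos hp.ne' hp'
  set L := lorentzNorm volume p q F
  have hk : ∀ k : ℕ, distFn volume F (2 ^ k) ≤ L ^ p.toReal * ENNReal.ofReal ((2 ^ k) ^ (-p.toReal)) := by
    intro k
    have h := lor_weak volume p q hp hp' hq F (2 ^ k) (by positivity)
    have h1 := ENNReal.rpow_le_rpow h hpr.le
    rw [ENNReal.mul_rpow_of_nonneg _ _ hpr.le, ← ENNReal.rpow_mul, one_div_mul_cancel hpr.ne', ENNReal.rpow_one,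
      ENNReal.ofReal_rpow_of_pos (by positivity)] at h1
    calc distFn volume F (2 ^ k) = ENNReal.ofReal (((2 : ℝ) ^ k) ^ (-p.toReal)) *
          (ENNReal.ofReal ((2 ^ k) ^ p.toReal) * distFn volume F (2 ^ k)) := by
          rw [← mul_assoc, ← ENNReal.ofReal_mul (by positivity), ← Real.rpow_add (by positivity)]
          simp
      _ ≤ ENNReal.ofReal (((2 : ℝ) ^ k) ^ (-p.toReal)) * L ^ p.toReal := mul_le_mul_right h1 _
      _ = _ := mul_comm _ _
  unfold TT
  have hb : ∀ k : ℕ, ENNReal.ofReal ((2 ^ (k + 1) * 1) ^ s) * distFn volume (fun u => F (R⁻¹ * u)) (2 ^ k * 1) ≤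
      (ENNReal.ofReal (2 ^ s) * ENNReal.ofReal R * L ^ p.toReal) * ENNReal.ofReal ((2 ^ k) ^ (s - p.toReal)) := by
    intro k
    rw [distFn_scale F R hR, mul_one, mul_one, pow_succ', Real.mul_rpow (by norm_num) (by positivity),
      ENNReal.ofReal_mul (by positivity)]
    calc _ ≤ ENNReal.ofReal (2 ^ s) * ENNReal.ofReal ((2 ^ k) ^ s) *
          (ENNReal.ofReal R * (L ^ p.toReal * ENNReal.ofReal ((2 ^ k) ^ (-p.toReal)))) :=
          mul_le_mul_right (mul_le_mul_right (hk k) _) _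
      _ = (ENNReal.ofReal (2 ^ s) * ENNReal.ofReal R * L ^ p.toReal) *
          (ENNReal.ofReal ((2 ^ k) ^ s) * ENNReal.ofReal ((2 ^ k) ^ (-p.toReal))) := by ring
      _ = _ := by
          congr 1
          rw [← ENNReal.ofReal_mul (by positivity), ← Real.rpow_add (by positivity)]
          rfl
  refine ne_top_of_le_ne_top ?_ (ENNReal.tsum_le_tsum hb)
  rw [ENNReal.tsum_mul_left]
  refine ENNReal.mul_ne_top (ENNReal.mul_ne_top (ENNReal.mul_ne_top ENNReal.ofReal_ne_top ENNReal.ofReal_ne_top)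
    (ENNReal.rpow_ne_top_of_nonneg hpr.le hF)) (geom_ne_top _ (by linarith))

/-- Restriction lemma: for `f ∈ E_R` with finite Lorentz norm, the restriction of `f` to `ℤ`
lies in `ℓ^{p,q}(ℤ)` with norm at most `C · max(1, R^{1/p₀})` times the Lorentz norm of `f`. -/
theorem stmt3 (p q p₀ : ℝ≥0∞) (hq : 0 < q) (hp₀ : 0 < p₀) (h₀ : p₀ < p) :
    ∃ C : ℝ, 0 < C ∧ ∀ R : ℝ, 0 < R → ∀ f : ℝ → ℂ, InER R f →
      lorentzNormC volume p q f < ∞ →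
      lorentzNormC Measure.count p q (fun n : ℤ => f n) < ∞ ∧
      lorentzNormC Measure.count p q (fun n : ℤ => f n) ≤
        ENNReal.ofReal (C * max 1 (R ^ (1 / p₀.toReal))) * lorentzNormC volume p q f := by
  by_cases hpt : p = ∞
  · refine ⟨1, one_pos, fun R hR f hf hfin => ?_⟩
    subst hpt
    rw [lorentzNormC, lor_top volume q hq] at hfin
    exact absurd hfin (lt_irrefl _)
  have hp : 0 < p := hp₀.trans h₀
  have hpr : 0 < p.toReal := ENNReal.toReal_pos hp.ne' hpt
  have hp₀t : p₀ ≠ ∞ := ne_top_of_lt h₀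
  have hp₀r : 0 < p₀.toReal := ENNReal.toReal_pos hp₀.ne' hp₀t
  have hp₀p : p₀.toReal ≤ p.toReal := ENNReal.toReal_mono hpt h₀.le
  set s : ℝ := min 1 p.toReal / 4 with hs_def
  have hmin : 0 < min 1 p.toReal := lt_min one_pos hpr
  have hs : 0 < s := by positivity
  have hs1 : s ≤ 1 := by
    have := min_le_left 1 p.toReal
    linarith
  have hsp : 2 * s < p.toReal := by
    have := min_le_right 1 p.toReal
    linarith
  obtain ⟨N0, hN0⟩ := exists_nat_ge (2 / s)
  have hN0s : ∀ N : ℕ, N0 ≤ N → 2 ≤ N * s := by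
    intro N hN
    have : (N0 : ℝ) ≤ N := by exact_mod_cast hN
    rw [← div_le_iff₀ hs]
    linarith
  obtain ⟨B, hB, hrep⟩ := hrep_aux N0
  obtain ⟨c, hc, hcB⟩ : ∃ c : ℝ, 0 < c ∧ B * c1 * ENNReal.ofReal (c ^ s) ≤ 1 / 2 := by
    have hb : B * c1 ≠ ∞ := ENNReal.mul_ne_top hB c1_ne_top
    set b := (B * c1).toReal with hbdef
    have hb0 : 0 ≤ b := ENNReal.toReal_nonneg
    refine ⟨(1 / (2 * (b + 1))) ^ s⁻¹, by positivity, ?_⟩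
    rw [← Real.rpow_mul (by positivity), inv_mul_cancel₀ hs.ne', Real.rpow_one, ← ENNReal.ofReal_toReal hb,
      ← hbdef, ← ENNReal.ofReal_mul hb0]
    have : (1 / 2 : ℝ≥0∞) = ENNReal.ofReal (1 / 2) := by
      rw [ENNReal.ofReal_div_of_pos (by norm_num)]; simp
    rw [this]
    apply ENNReal.ofReal_le_ofReal
    rw [mul_one_div, div_le_div_iff₀ (by positivity) (by norm_num)]
    linarith
  obtain ⟨C0, hC0, hmain⟩ := lor_main p q hp hpt hq s c hs hc hsp
  set A0 : ℝ≥0∞ := 2 * B * c2 * ENNReal.ofReal ((2 * c) ^ s) with hA0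
  have hA0t : A0 ≠ ∞ := ENNReal.mul_ne_top (ENNReal.mul_ne_top (ENNReal.mul_ne_top (by simp) hB) c2_ne_top)
    ENNReal.ofReal_ne_top
  have hCt : C0 * A0 ^ (1 / p.toReal) ≠ ∞ :=
    ENNReal.mul_ne_top hC0 (ENNReal.rpow_ne_top_of_nonneg (by positivity) hA0t)
  refine ⟨(C0 * A0 ^ (1 / p.toReal)).toReal + 1, by positivity, fun R hR f hf hfin => ?_⟩
  suffices hle : lorentzNormC Measure.count p q (fun n : ℤ => f n) ≤
        ENNReal.ofReal (((C0 * A0 ^ (1 / p.toReal)).toReal + 1) * max 1 (R ^ (1 / p₀.toReal))) *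
          lorentzNormC volume p q f from
    ⟨hle.trans_lt (ENNReal.mul_lt_top ENNReal.ofReal_lt_top hfin), hle⟩
  set R1 := max 1 R with hR1def
  have h11 : 1 ≤ R1 := le_max_left _ _
  have hR1 : R ≤ R1 := le_max_right _ _
  have hR1p : 0 < R1 := by linarith
  set F : ℝ → ℝ≥0∞ := fun x => (‖f x‖₊ : ℝ≥0∞) with hFdef
  set G : ℝ → ℝ≥0∞ := fun u => F (R1⁻¹ * u) with hGdef
  have hGm : Measurable G := by
    have : Continuous fun u => f (R1⁻¹ * u) := hf.1.comp (by fun_prop)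
    exact this.measurable.enorm
  have hGf : ∀ z, G z ≠ ∞ := fun z => ENNReal.coe_ne_top
  have hbdd : ∃ M0 : ℝ≥0∞, M0 ≠ ∞ ∧ ∀ y, G y ≤ M0 := by
    obtain ⟨k, hk⟩ := growth_aux f R hf R1 h11
    obtain ⟨B', hB', hrep'⟩ := hrep_aux (max k N0)
    refine G_bdd G hGm hGf s hs B' hB' (fun x => ?_)
      (TT_fin p q hp hpt hq s (by linarith) F hfin.ne R1 hR1p)
    exact peetre' G B' (max k N0) s hs hs1 (hN0s _ (le_max_right _ _))
      (hrep' f R hR hf R1 hR1 h11) x (hk _ (le_max_left _ _) x)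
  have hP : ∀ x, G x ^ s ≤ B * ∫⁻ z, G z ^ s * rho (z - x) ^ 2 := by
    obtain ⟨M0, hM0, hM⟩ := hbdd
    intro x
    refine peetre' G B N0 s hs hs1 (hN0s _ le_rfl) (hrep f R hR hf R1 hR1 h11) x ⟨M0, hM0, fun y => ?_⟩
    exact (mul_le_of_le_one_right' (pow_le_one' (rho_le_one _) _)).trans (hM y)
  have hcount := hmain (A0 * ENNReal.ofReal R1) (fun n : ℤ => F n) F (fun t ht => by
    have h := count_le G hGm hGf s hs B hP c hc hcB R1 h11 t ht
    have e : (fun n : ℤ => G (R1 * n)) = fun n : ℤ => F n := by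
      ext n
      simp only [hGdef]
      rw [inv_mul_cancel_left₀ hR1p.ne']
    rw [e] at h
    refine h.trans (le_of_eq ?_)
    rw [← hA0, mul_assoc A0]
    congr 1
    rw [← ENNReal.tsum_mul_left]
    refine tsum_congr fun k => ?_
    rw [hGdef, distFn_scale F R1 hR1p]
    ring)
  refine le_trans hcount ?_
  refine mul_le_mul_left ?_ _
  have hmax : R1 ^ (1 / p.toReal) ≤ max 1 (R ^ (1 / p₀.toReal)) := by
    calc R1 ^ (1 / p.toReal) ≤ R1 ^ (1 / p₀.toReal) :=
          Real.rpow_le_rpow_of_exponent_le h11 (one_div_le_one_div_of_le hp₀r hp₀p)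
      _ ≤ _ := by
          rcases le_total R 1 with h | h
          · rw [hR1def, max_eq_left h, Real.one_rpow]; exact le_max_left _ _
          · rw [hR1def, max_eq_right h]; exact le_max_right _ _
  rw [ENNReal.mul_rpow_of_nonneg _ _ (by positivity), ENNReal.ofReal_rpow_of_pos hR1p, ← mul_assoc,
    ENNReal.ofReal_mul (by positivity)]
  refine mul_le_mul' ?_ (ENNReal.ofReal_le_ofReal hmax)
  rw [ENNReal.le_ofReal_iff_toReal_le hCt (by positivity)]
  linarith
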